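/- Let X, Y, Z, W be Polish spaces with Y and Z σ-compact, and let g : X × Y × Z × W → ℝ̄ be lower semicontinuous. Then the function f : X → ℝ̄ defined by f(x) = sup_{y ∈ Y} inf_{z ∈ Z} sup_{w ∈ W} g(x,y,z,w) is semi-Σ¹₁, i.e. for every r ∈ ℝ̄ the superlevel set {x ∈ X : f(x) > r} is analytic; consequently, for every σ-finite Borel measure μ on X and every r ∈ ℝ̄, the set {x ∈ X : f(x) > r} is μ-null-measurable (measurable with respect to the completion of μ). -/

import Mathlib

open MeasureTheory

/-!
Two facts are combined. First, `⨆ w, g` is lower semicontinuous, an infimum of a lower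
semicontinuous function over a compact parameter set is lower semicontinuous, and hence an
infimum over a σ-compact one is Borel as a countable infimum of such functions. The strict
superlevel sets of `⨆ y` are then projections of Borel sets.

Second, analytic sets are universally measurable. If `f` maps the Baire space onto `A` and
`c < μ A`, one bounds the coordinates one after the other, keeping the outer measure of the image
above `c`. The sequences satisfying all the bounds form a compact set, whose image is the
intersection of the closures of the images at the finite stages, so it has measure at least `c`.
-/

section CompactInfimum

open Set

variable {T Z α : Type*} [TopologicalSpace T] [TopologicalSpace Z] [CompleteLinearOrder α]

lemma lt_biInf_iff_of_isCompact {K : Set Z} (hK : IsCompact K) (hne : K.Nonempty) {f : Z → α}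
    (hf : LowerSemicontinuousOn f K) {a : α} : a < ⨅ z ∈ K, f z ↔ ∀ z ∈ K, a < f z := by
  refine ⟨fun h z hz => h.trans_le (biInf_le f hz), fun h => ?_⟩
  obtain ⟨z₀, hz₀, hmin⟩ := hf.exists_isMinOn hne hK
  exact (h z₀ hz₀).trans_le (le_iInf₂ hmin)

lemma lowerSemicontinuous_biInf_of_isCompact {K : Set Z} (hK : IsCompact K) {h : T × Z → α}
    (hh : LowerSemicontinuous h) : LowerSemicontinuous fun t => ⨅ z ∈ K, h (t, z) := by
  rcases K.eq_empty_or_nonempty with rfl | hne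
  · simpa only [mem_empty_iff_false, iInf_false, iInf_top] using lowerSemicontinuous_const
  have lt_iff (t : T) (a : α) : a < ⨅ z ∈ K, h (t, z) ↔ ∀ z ∈ K, a < h (t, z) :=
    lt_biInf_iff_of_isCompact hK hne
      ((hh.comp (g := fun z => (t, z)) (by fun_prop)).lowerSemicontinuousOn K)
  intro t a hta
  simp only [lt_iff] at hta ⊢
  exact hK.eventually_forall_of_forall_eventually fun z hz => hh (t, z) a (hta z hz)

variable [TopologicalSpace α] [OrderTopology α] [SecondCountableTopology α]

lemma measurable_iInf_of_sigmaCompactSpace [MeasurableSpace T] [OpensMeasurableSpace T]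
    [SigmaCompactSpace Z] [MeasurableSpace α] [BorelSpace α] {h : T × Z → α}
    (hh : LowerSemicontinuous h) : Measurable fun t => ⨅ z, h (t, z) := by
  have iInf_eq (t : T) : ⨅ z, h (t, z) = ⨅ n, ⨅ z ∈ compactCovering Z n, h (t, z) := by
    rw [← iInf_iUnion, iUnion_compactCovering, iInf_univ]
  simp only [iInf_eq]
  exact .iInf fun n =>
    (lowerSemicontinuous_biInf_of_isCompact (isCompact_compactCovering Z n) hh).measurable

end CompactInfimum

section Superlevel

open Set

variable {X Y Z W α : Type*} [TopologicalSpace X] [PolishSpace X] [TopologicalSpace Y]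
  [PolishSpace Y] [TopologicalSpace Z] [SigmaCompactSpace Z] [CompleteLinearOrder α]
  [TopologicalSpace α] [OrderTopology α]

lemma analyticSet_lt_iSup [MeasurableSpace (X × Y)] [BorelSpace (X × Y)] [MeasurableSpace α]
    [OpensMeasurableSpace α] {k : X × Y → α} (hk : Measurable k) (r : α) :
    AnalyticSet {x | r < ⨆ y, k (x, y)} := by
  have eq_image : {x | r < ⨆ y, k (x, y)} = Prod.fst '' (k ⁻¹' Ioi r) := by
    ext x
    simp [lt_iSup_iff]
  rw [eq_image]
  exact (hk measurableSet_Ioi).analyticSet.image_of_continuous continuous_fst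

lemma analyticSet_lt_iSup_iInf_iSup [SecondCountableTopology α] (g : X × Y × Z × W → α)
    (hg : ∀ w, LowerSemicontinuous fun p : X × Y × Z => g (p.1, p.2.1, p.2.2, w)) (r : α) :
    AnalyticSet {x | r < ⨆ y, ⨅ z, ⨆ w, g (x, y, z, w)} := by
  borelize (X × Y) α
  have lsc : LowerSemicontinuous fun q : (X × Y) × Z => ⨆ w, g (q.1.1, q.1.2, q.2, w) :=
    lowerSemicontinuous_iSup fun w =>
      (hg w).comp (g := fun q : (X × Y) × Z => (q.1.1, q.1.2, q.2)) (by fun_prop)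
  exact analyticSet_lt_iSup (measurable_iInf_of_sigmaCompactSpace lsc) r

end Superlevel

section Product

open Set

lemma exists_finset_forall_mem_of_isCompact {ι : Type*} {E : ι → Type*}
    [∀ i, TopologicalSpace (E i)] {K V : Set (∀ i, E i)} (hK : IsCompact K) (hV : IsOpen V)
    (hKV : K ⊆ V) : ∃ I : Finset ι, ∀ x ∈ K, ∀ y, (∀ i ∈ I, y i = x i) → y ∈ V := by
  classical
  refine hK.induction_on (p := fun s => ∃ I : Finset ι, ∀ x ∈ s, ∀ y, (∀ i ∈ I, y i = x i) → y ∈ V)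
    ⟨∅, by simp⟩ ?_ ?_ fun x hx => ?_
  · rintro s t hst ⟨I, hI⟩
    exact ⟨I, fun x hx => hI x (hst hx)⟩
  · rintro s t ⟨I, hI⟩ ⟨J, hJ⟩
    refine ⟨I ∪ J, fun x hx y hy => ?_⟩
    rcases hx with hx | hx
    · exact hI x hx y fun i hi => hy i (Finset.mem_union_left J hi)
    · exact hJ x hx y fun i hi => hy i (Finset.mem_union_right I hi)
  · obtain ⟨I, u, hu, huV⟩ := isOpen_pi_iff.1 hV x (hKV hx)
    refine ⟨(I : Set ι).pi u, mem_nhdsWithin_of_mem_nhds ?_, I, fun z hz y hy => huV fun i hi => ?_⟩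
    · exact set_pi_mem_nhds I.finite_toSet fun i hi => (hu i hi).1.mem_nhds (hu i hi).2
    · exact hy i hi ▸ hz i hi

variable {E : ℕ → Type*}

lemma exists_setOf_forall_lt_le_subset [∀ i, TopologicalSpace (E i)]
    [∀ i, SemilatticeInf (E i)] {n : ∀ i, E i} (hn : IsCompact (Iic n)) {V : Set (∀ i, E i)}
    (hV : IsOpen V) (hnV : Iic n ⊆ V) : ∃ k, {x | ∀ i < k, x i ≤ n i} ⊆ V := by
  obtain ⟨I, hI⟩ := exists_finset_forall_mem_of_isCompact hn hV hnV
  obtain ⟨k, hk⟩ := I.exists_nat_subset_range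
  refine ⟨k, fun x hx => hI (x ⊓ n) (mem_Iic.2 inf_le_right) x fun i hi => ?_⟩
  exact (inf_eq_left.2 (hx i (Finset.mem_range.1 (hk hi)))).symm

lemma iInter_closure_image_subset_image_Iic [∀ i, TopologicalSpace (E i)]
    [∀ i, SemilatticeInf (E i)] {X : Type*} [TopologicalSpace X] [T2Space X] {f : (∀ i, E i) → X}
    (hf : Continuous f) {n : ∀ i, E i} (hn : IsCompact (Iic n)) :
    ⋂ k, closure (f '' {x | ∀ i < k, x i ≤ n i}) ⊆ f '' Iic n := by
  intro y hy
  by_contra hyn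
  obtain ⟨U, V, hU, hV, hnU, hyV, hUV⟩ := (hn.image hf).separation_of_notMem hyn
  obtain ⟨k, hk⟩ := exists_setOf_forall_lt_le_subset hn (hU.preimage hf) (image_subset_iff.1 hnU)
  have hyU : y ∈ closure U := closure_mono (image_subset_iff.2 hk) (mem_iInter.1 hy k)
  exact disjoint_left.1 (hUV.closure_left hV) hyU hyV

lemma exists_forall_of_forall_exists_update {P : ℕ → (∀ i, E i) → Prop}
    (hcongr : ∀ k x y, (∀ i < k, x i = y i) → P k x → P k y) {x₀ : ∀ i, E i} (h₀ : P 0 x₀)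
    (hstep : ∀ k x, P k x → ∃ a, P (k + 1) (Function.update x k a)) : ∃ x, ∀ k, P k x := by
  have (k : ℕ) : Nonempty (E k) := ⟨x₀ k⟩
  choose! a ha using hstep
  let s : ℕ → ∀ i, E i := fun k => Nat.rec x₀ (fun k x => Function.update x k (a k x)) k
  have hs (k : ℕ) : P k (s k) := Nat.rec h₀ (fun k => ha k (s k)) k
  have s_stable (k i : ℕ) (hik : i < k) : s k i = s (i + 1) i := by
    induction k, hik using Nat.le_induction with
    | base => rfl
    | succ k hik ih => exact (Function.update_of_ne (Nat.ne_of_lt hik) _ _).trans ih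
  exact ⟨fun i => s (i + 1) i, fun k => hcongr k (s k) _ (s_stable k) (hs k)⟩

end Product

section UniversalMeasurability

open Set

variable {X : Type*} [MeasurableSpace X]

lemma exists_lt_measure_image_update (μ : Measure X) (f : (ℕ → ℕ) → X) {c : ENNReal} (k : ℕ)
    (n : ℕ → ℕ) (hc : c < μ (f '' {x | ∀ i < k, x i ≤ n i})) :
    ∃ m, c < μ (f '' {x | ∀ i < k + 1, x i ≤ Function.update n k m i}) := by
  have forall_update (x : ℕ → ℕ) (m : ℕ) :
      (∀ i < k + 1, x i ≤ Function.update n k m i) ↔ (∀ i < k, x i ≤ n i) ∧ x k ≤ m := by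
    rw [Nat.forall_lt_succ_right, Function.update_self]
    exact and_congr_left' (forall₂_congr fun i hi => by rw [Function.update_of_ne hi.ne])
  simp only [forall_update]
  have image_eq : f '' {x | ∀ i < k, x i ≤ n i} =
      ⋃ m, f '' {x | (∀ i < k, x i ≤ n i) ∧ x k ≤ m} := by
    rw [← image_iUnion]
    congr 1
    ext x
    simpa using fun _ => ⟨x k, le_rfl⟩
  have mono : Monotone fun m => f '' {x : ℕ → ℕ | (∀ i < k, x i ≤ n i) ∧ x k ≤ m} :=
    fun _ _ hab => image_mono fun _ hx => ⟨hx.1, hx.2.trans hab⟩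
  rwa [image_eq, mono.measure_iUnion, lt_iSup_iff] at hc

lemma exists_forall_lt_measure_image (μ : Measure X) (f : (ℕ → ℕ) → X) {c : ENNReal}
    (hc : c < μ (range f)) : ∃ n : ℕ → ℕ, ∀ k, c < μ (f '' {x | ∀ i < k, x i ≤ n i}) := by
  refine exists_forall_of_forall_exists_update (x₀ := 0) (fun k n n' hnn' h => ?_) ?_
    (exists_lt_measure_image_update μ f)
  · rwa [← show {x : ℕ → ℕ | ∀ i < k, x i ≤ n i} = {x | ∀ i < k, x i ≤ n' i} from
      ext fun x => forall₂_congr fun i hi => by rw [hnn' i hi]]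
  · simpa using hc

variable [TopologicalSpace X] [T2Space X] [OpensMeasurableSpace X] {A : Set X}

lemma exists_lt_isCompact_of_analyticSet (μ : Measure X) [IsFiniteMeasure μ] (hA : AnalyticSet A)
    {c : ENNReal} (hc : c < μ A) : ∃ K ⊆ A, IsCompact K ∧ c < μ K := by
  rw [AnalyticSet] at hA
  obtain rfl | ⟨f, hf, rfl⟩ := hA
  · simp at hc
  obtain ⟨c', hcc', hc'⟩ := exists_between hc
  obtain ⟨n, hn⟩ := exists_forall_lt_measure_image μ f hc'
  have hcomp : IsCompact (Iic n) := Icc_bot (a := n) ▸ isCompact_Icc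
  refine ⟨f '' Iic n, image_subset_range f _, hcomp.image hf, hcc'.trans_le ?_⟩
  have anti : Antitone fun k => closure (f '' {x | ∀ i < k, x i ≤ n i}) := fun _ _ hkl =>
    closure_mono (image_mono fun _ hx i hi => hx i (hi.trans_le hkl))
  calc
    c' ≤ ⨅ k, μ (closure (f '' {x | ∀ i < k, x i ≤ n i})) :=
      le_iInf fun k => (hn k).le.trans (measure_mono subset_closure)
    _ = μ (⋂ k, closure (f '' {x | ∀ i < k, x i ≤ n i})) :=
      (anti.measure_iInter (fun k => isClosed_closure.nullMeasurableSet)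
        ⟨0, measure_ne_top _ _⟩).symm
    _ ≤ μ (f '' Iic n) := measure_mono (iInter_closure_image_subset_image_Iic hf hcomp)

lemma nullMeasurableSet_of_analyticSet_of_isFiniteMeasure (μ : Measure X) [IsFiniteMeasure μ]
    (hA : AnalyticSet A) : NullMeasurableSet A μ := by
  rcases eq_or_ne (μ A) 0 with h0 | h0
  · exact .of_null h0
  obtain ⟨c, -, hc, hlim⟩ := exists_seq_strictMono_tendsto' (pos_iff_ne_zero.2 h0)
  choose K hKA hKc hK using fun i => exists_lt_isCompact_of_analyticSet μ hA (hc i).2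
  have hmeas : NullMeasurableSet (⋃ i, K i) μ :=
    .iUnion fun i => (hKc i).measurableSet.nullMeasurableSet
  have hle : μ A ≤ μ (⋃ i, K i) :=
    le_of_tendsto' hlim fun i => (hK i).le.trans (measure_mono (subset_iUnion K i))
  exact hmeas.congr
    (ae_eq_of_subset_of_measure_ge (iUnion_subset hKA) hle hmeas (measure_ne_top _ _))

lemma nullMeasurableSet_of_analyticSet (μ : Measure X) [SFinite μ] (hA : AnalyticSet A) :
    NullMeasurableSet A μ := by
  obtain ⟨ν, _, hμν, -⟩ := exists_isFiniteMeasure_absolutelyContinuous μ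
  exact (nullMeasurableSet_of_analyticSet_of_isFiniteMeasure ν hA).mono_ac hμν

end UniversalMeasurability

theorem stmt1_general {X Y Z W α : Type*}
    [TopologicalSpace X] [PolishSpace X] [MeasurableSpace X] [OpensMeasurableSpace X]
    [TopologicalSpace Y] [PolishSpace Y] [TopologicalSpace Z] [SigmaCompactSpace Z]
    [CompleteLinearOrder α] [TopologicalSpace α] [OrderTopology α] [SecondCountableTopology α]
    (g : X × Y × Z × W → α)
    (hg : ∀ w, LowerSemicontinuous fun p : X × Y × Z => g (p.1, p.2.1, p.2.2, w)) :
    (∀ r : α, AnalyticSet {x : X | r < ⨆ y : Y, ⨅ z : Z, ⨆ w : W, g (x, y, z, w)}) ∧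
    ∀ μ : Measure X, SFinite μ → ∀ r : α,
      NullMeasurableSet {x : X | r < ⨆ y : Y, ⨅ z : Z, ⨆ w : W, g (x, y, z, w)} μ := by
  have analytic := analyticSet_lt_iSup_iInf_iSup g hg
  exact ⟨analytic, fun μ _ r => nullMeasurableSet_of_analyticSet μ (analytic r)⟩

/-- For Polish `X, Y, Z, W` with `Y, Z` σ-compact and lower
semicontinuous `g : X × Y × Z × W → ℝ̄`, the function
`f x = ⨆ y, ⨅ z, ⨆ w, g (x,y,z,w)` is semi-Σ¹₁ (all strict superlevel sets
are analytic); consequently all its strict superlevel sets are null-measurable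
for every σ-finite Borel measure on `X`. -/
theorem stmt1 {X Y Z W : Type*}
    [TopologicalSpace X] [PolishSpace X] [MeasurableSpace X] [BorelSpace X]
    [TopologicalSpace Y] [PolishSpace Y] [SigmaCompactSpace Y]
    [TopologicalSpace Z] [PolishSpace Z] [SigmaCompactSpace Z]
    [TopologicalSpace W] [PolishSpace W]
    (g : X × Y × Z × W → EReal) (hg : LowerSemicontinuous g) :
    (∀ r : EReal,
      AnalyticSet {x : X | r < ⨆ y : Y, ⨅ z : Z, ⨆ w : W, g (x, y, z, w)}) ∧
    ∀ (μ : Measure X), SigmaFinite μ → ∀ r : EReal,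
      NullMeasurableSet {x : X | r < ⨆ y : Y, ⨅ z : Z, ⨆ w : W, g (x, y, z, w)} μ := by
  have general := stmt1_general g fun w =>
    hg.comp (g := fun p : X × Y × Z => (p.1, p.2.1, p.2.2, w)) (by fun_prop)
  exact ⟨general.1, fun μ _ => general.2 μ inferInstance⟩
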